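/- Let V be an n-element set, let X ⊆ V with |X| = ⌈2n/3⌉, and let H be the 3-graph on V whose edges are all 3-element subsets e of V with |e ∩ X| ≠ 2. Then H contains no tight Hamiltonian cycle, and for every ε > 0 there exists n_0 such that for all n ≥ n_0, δ(H) ≥ (5/9 − ε)·C(n−1,2). -/

import Mathlib

open Finset

/-- A tight Hamiltonian cycle in a 3-graph `H` on a finite vertex set `V`:
a cyclic ordering of all vertices in which every three cyclically
consecutive vertices form an edge of `H`. -/
def HasTightHamCycle {V : Type} [DecidableEq V] [Fintype V] (H : Finset (Finset V)) : Prop :=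
  ∃ f : ZMod (Fintype.card V) → V, Function.Bijective f ∧
    ∀ i, ({f i, f (i + 1), f (i + 2)} : Finset V) ∈ H

/-- The 3-graph on `V` whose edges are all 3-element subsets `e` with `|e ∩ X| ≠ 2`. -/
def compX (V : Type) [DecidableEq V] [Fintype V] (X : Finset V) : Finset (Finset V) :=
  ((Finset.univ : Finset V).powersetCard 3).filter fun e => (e ∩ X).card ≠ 2

/-!
In a cyclic ordering whose consecutive triples never meet `X` in exactly two vertices, two vertices
of `X` at distance one force the next vertex into `X`, and two at distance two force the one
between them. So either `X` is everything, or the translates by `0, 1, 2` of the set of positions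
of `X` are pairwise disjoint and `3|X| ≤ n`. For `n ≥ 3` the value `|X| = ⌈2n/3⌉` allows neither,
and for `n < 3` there are no edges.

The link of a vertex `v ∈ X` (`Finset.memberSubfamily v`) consists of the pairs that avoid `v` and
lie inside `X` or inside its complement, and the link of `v ∉ X` of the pairs that avoid `v` and
are not contained in `X`. For `|X| ≈ 2n/3` their densities are `(2/3)² + (1/3)² = 5/9` and
`1 - (2/3)² = 5/9`.
-/

section Cyclic

lemma three_mul_card_le_of_add_notMem {G : Type*} [AddGroup G] [Fintype G] {S : Finset G}
    {a : G} (h₁ : ∀ i ∈ S, i + a ∉ S) (h₂ : ∀ i ∈ S, i + a + a ∉ S) :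
    3 * #S ≤ Fintype.card G := by
  classical
  let shift : G ↪ G := addRightEmbedding a
  have disjoint_shift : Disjoint S (S.map shift) := by
    simpa [disjoint_right, shift] using h₁
  have disjoint_shift_shift : Disjoint S ((S.map shift).map shift) := by
    simpa [disjoint_right, shift] using h₂
  have disjoint_shifts : Disjoint (S.map shift) ((S.map shift).map shift) :=
    (disjoint_map shift).2 disjoint_shift
  calc 3 * #S = #(S ∪ (S.map shift ∪ (S.map shift).map shift)) := by
        rw [card_union_of_disjoint (disjoint_union_right.2 ⟨disjoint_shift, disjoint_shift_shift⟩),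
          card_union_of_disjoint disjoint_shifts]
        simp only [card_map]
        ring
    _ ≤ Fintype.card G := card_le_univ _

variable {n : ℕ} [NeZero n] {S : Finset (ZMod n)}

lemma eq_univ_of_consecutive_mem (hnext : ∀ i ∈ S, i + 1 ∈ S → i + 2 ∈ S) {i : ZMod n}
    (hi : i ∈ S) (hi' : i + 1 ∈ S) : S = univ := by
  have hforward (k : ℕ) : i + k ∈ S ∧ i + k + 1 ∈ S := by
    induction k with
    | zero => simpa using ⟨hi, hi'⟩
    | succ k ih =>
      have hnew : i + k + 2 ∈ S := hnext _ ih.1 ih.2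
      rw [Nat.cast_succ, ← add_assoc, add_assoc (i + (k : ZMod n)) 1 1, one_add_one_eq_two]
      exact ⟨ih.2, hnew⟩
  refine eq_univ_of_forall fun j ↦ ?_
  obtain ⟨k, hk⟩ := ZMod.natCast_zmod_surjective (j - i)
  simpa [hk] using (hforward k).1

lemma eq_univ_or_three_mul_card_le (hnext : ∀ i ∈ S, i + 1 ∈ S → i + 2 ∈ S)
    (hmid : ∀ i ∈ S, i + 2 ∈ S → i + 1 ∈ S) : S = univ ∨ 3 * #S ≤ n := by
  refine or_iff_not_imp_left.2 fun hS ↦ ?_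
  have h₁ (i) (hi : i ∈ S) : i + 1 ∉ S := fun hi' ↦ hS (eq_univ_of_consecutive_mem hnext hi hi')
  have h₂ (i) (hi : i ∈ S) : i + 1 + 1 ∉ S := by
    rw [add_assoc, one_add_one_eq_two]
    exact fun hi' ↦ h₁ i hi (hmid i hi hi')
  simpa only [ZMod.card] using three_mul_card_le_of_add_notMem h₁ h₂

end Cyclic

/-- The degree of the vertex `v` in the hypergraph `H`: the number of edges of `H` through `v`. -/
def vertexDegree {V : Type*} [DecidableEq V] (H : Finset (Finset V)) (v : V) : ℕ :=
  #{e ∈ H | v ∈ e}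

lemma card_memberSubfamily_eq_vertexDegree {V : Type*} [DecidableEq V] (H : Finset (Finset V))
    (v : V) : #(H.memberSubfamily v) = vertexDegree H v :=
  card_image_of_injOn <| (erase_injOn' v).mono fun _ he ↦ (mem_filter.1 he).2

lemma disjoint_powersetCard {α : Type*} {s t : Finset α} {k : ℕ} (hk : k ≠ 0)
    (h : Disjoint s t) : Disjoint (s.powersetCard k) (t.powersetCard k) := by
  refine disjoint_left.2 fun p hps hpt ↦ hk ?_
  rw [mem_powersetCard] at hps hpt
  rw [← hps.2, card_eq_zero]
  exact subset_empty.1 (h hps.1 hpt.1)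

section CompX

variable {V : Type} [DecidableEq V] [Fintype V] {X : Finset V}

lemma mem_compX {e : Finset V} : e ∈ compX V X ↔ #e = 3 ∧ #(e ∩ X) ≠ 2 := by
  simp [compX, mem_powersetCard]

lemma mem_of_triple_mem_compX {a b c : V} (he : {a, b, c} ∈ compX V X) (ha : a ∈ X)
    (hb : b ∈ X) : c ∈ X := by
  obtain ⟨hcard, hinter⟩ := mem_compX.1 he
  have hab : a ≠ b := (card_triple_eq_three_iff.1 hcard).1
  by_contra hc
  refine hinter ?_
  rw [insert_inter_of_mem ha, insert_inter_of_mem hb, singleton_inter_of_notMem hc]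
  exact card_pair hab

lemma three_le_card_of_hasTightHamCycle_compX (h : HasTightHamCycle (compX V X)) :
    3 ≤ Fintype.card V := by
  obtain ⟨f, -, hedge⟩ := h
  exact (mem_compX.1 (hedge 0)).1.ge.trans (card_le_univ _)

theorem not_hasTightHamCycle_compX (hlower : Fintype.card V < 3 * #X)
    (hupper : #X < Fintype.card V) : ¬ HasTightHamCycle (compX V X) := by
  rintro ⟨f, hf, hedge⟩
  have : Nonempty V := ⟨f 0⟩
  let e : ZMod (Fintype.card V) ≃ V := Equiv.ofBijective f hf
  let S : Finset (ZMod (Fintype.card V)) := X.map e.symm.toEmbedding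
  have mem_S {i} : i ∈ S ↔ f i ∈ X := mem_map_equiv
  have hnext (i) (hi : i ∈ S) (hi' : i + 1 ∈ S) : i + 2 ∈ S :=
    mem_S.2 (mem_of_triple_mem_compX (hedge i) (mem_S.1 hi) (mem_S.1 hi'))
  have hmid (i) (hi : i ∈ S) (hi' : i + 2 ∈ S) : i + 1 ∈ S := by
    have hswap := hedge i
    rw [pair_comm (f (i + 1))] at hswap
    exact mem_S.2 (mem_of_triple_mem_compX hswap (mem_S.1 hi) (mem_S.1 hi'))
  rcases eq_univ_or_three_mul_card_le hnext hmid with hS | hS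
  · refine (card_lt_iff_ne_univ X).1 hupper (eq_univ_of_forall fun v ↦ ?_)
    obtain ⟨i, rfl⟩ := hf.surjective v
    exact mem_S.1 (hS ▸ mem_univ i)
  · rw [card_map] at hS
    exact hlower.not_ge hS

lemma mem_memberSubfamily_compX {v : V} {p : Finset V} :
    p ∈ (compX V X).memberSubfamily v ↔ v ∉ p ∧ #p = 2 ∧ #(insert v p ∩ X) ≠ 2 := by
  rw [mem_memberSubfamily, mem_compX, and_comm]
  refine and_congr_right fun hv ↦ ?_
  rw [card_insert_of_notMem hv, Nat.succ_inj]

lemma memberSubfamily_compX_of_mem {v : V} (hv : v ∈ X) :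
    (compX V X).memberSubfamily v = (X.erase v).powersetCard 2 ∪ Xᶜ.powersetCard 2 := by
  ext p
  have hsplit : #(p ∩ X) + #(p \ X) = #p := card_inter_add_card_sdiff p X
  have hsub : p ⊆ X ↔ #(p \ X) = 0 := by rw [card_eq_zero, sdiff_eq_empty_iff_subset]
  have hdisj : p ⊆ Xᶜ ↔ #(p ∩ X) = 0 := by
    rw [card_eq_zero, ← disjoint_iff_inter_eq_empty, subset_compl_iff_disjoint_right]
  have hvp : p ⊆ Xᶜ → v ∉ p := fun h hvp ↦ mem_compl.1 (h hvp) hv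
  rw [mem_memberSubfamily_compX, mem_union, mem_powersetCard, mem_powersetCard, subset_erase,
    insert_inter_of_mem hv]
  by_cases hp : v ∈ p
  · tauto
  · rw [card_insert_of_notMem fun h ↦ hp (mem_inter.1 h).1, hsub, hdisj]
    grind

lemma memberSubfamily_compX_of_notMem {v : V} (hv : v ∉ X) :
    (compX V X).memberSubfamily v = ({v}ᶜ : Finset V).powersetCard 2 \ X.powersetCard 2 := by
  ext p
  have hsub : p ⊆ X ↔ #(p ∩ X) = #p := by
    rw [← inter_eq_left]
    exact ⟨congrArg card, fun h ↦ eq_of_subset_of_card_le inter_subset_left h.ge⟩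
  rw [mem_memberSubfamily_compX, insert_inter_of_notMem hv, mem_sdiff, mem_powersetCard,
    mem_powersetCard, subset_compl_singleton]
  grind

lemma vertexDegree_compX_of_mem {v : V} (hv : v ∈ X) :
    vertexDegree (compX V X) v = (#X - 1).choose 2 + (#Xᶜ).choose 2 := by
  have hdisj : Disjoint ((X.erase v).powersetCard 2) (Xᶜ.powersetCard 2) :=
    disjoint_powersetCard two_ne_zero (disjoint_compl_right.mono_left (erase_subset v X))
  rw [← card_memberSubfamily_eq_vertexDegree, memberSubfamily_compX_of_mem hv,
    card_union_of_disjoint hdisj, card_powersetCard, card_powersetCard, card_erase_of_mem hv]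

lemma vertexDegree_compX_add_choose_of_notMem {v : V} (hv : v ∉ X) :
    vertexDegree (compX V X) v + (#X).choose 2 = (Fintype.card V - 1).choose 2 := by
  have hsub : X.powersetCard 2 ⊆ ({v}ᶜ : Finset V).powersetCard 2 :=
    powersetCard_mono (subset_compl_singleton.2 hv)
  rw [← card_memberSubfamily_eq_vertexDegree, memberSubfamily_compX_of_notMem hv,
    ← card_powersetCard 2 X, card_sdiff_add_card_eq_card hsub, card_powersetCard, card_compl,
    card_singleton]

lemma five_ninths_mul_choose_le_vertexDegree_compX_add_card (hlower : 2 * Fintype.card V ≤ 3 * #X)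
    (hupper : 3 * #X ≤ 2 * Fintype.card V + 2) (v : V) :
    5 / 9 * ((Fintype.card V - 1).choose 2 : ℝ) ≤
      vertexDegree (compX V X) v + Fintype.card V := by
  have hpos : 1 ≤ Fintype.card V := Fintype.card_pos_iff.2 ⟨v⟩
  have hlower' : 2 * (Fintype.card V : ℝ) ≤ 3 * #X := mod_cast hlower
  have hupper' : 3 * (#X : ℝ) ≤ 2 * Fintype.card V + 2 := mod_cast hupper
  by_cases hv : v ∈ X
  · have hX : 1 ≤ #X := card_pos.2 ⟨v, hv⟩
    rw [vertexDegree_compX_of_mem hv, card_compl]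
    push_cast [Nat.cast_choose_two, Nat.cast_sub hpos, Nat.cast_sub hX,
      Nat.cast_sub (card_le_univ X)]
    nlinarith
  · have hdeg : (vertexDegree (compX V X) v : ℝ) =
        (Fintype.card V - 1).choose 2 - (#X).choose 2 :=
      eq_sub_of_add_eq (mod_cast vertexDegree_compX_add_choose_of_notMem hv)
    rw [hdeg]
    push_cast [Nat.cast_choose_two, Nat.cast_sub hpos]
    nlinarith

end CompX

lemma ceil_two_mul_div_three_bounds {n x : ℕ} (h : (x : ℤ) = ⌈2 * (n : ℚ) / 3⌉) :
    2 * n ≤ 3 * x ∧ 3 * x ≤ 2 * n + 2 := by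
  obtain ⟨hlt, hle⟩ := Int.ceil_eq_iff.1 h.symm
  rw [Int.cast_natCast] at hlt hle
  have hlower : (2 * n : ℚ) ≤ 3 * x := by linarith
  have hupper : (3 * x : ℚ) < 2 * n + 3 := by linarith
  norm_cast at hlower hupper
  exact ⟨hlower, by lia⟩

open Filter in
lemma eventually_le_mul_choose_two {ε : ℝ} (hε : 0 < ε) :
    ∀ᶠ n : ℕ in atTop, (n : ℝ) ≤ ε * (n - 1).choose 2 := by
  filter_upwards [eventually_ge_atTop 6,
    tendsto_natCast_atTop_atTop.eventually_ge_atTop (4 / ε)] with n hn hεn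
  have hn' : (6 : ℝ) ≤ n := mod_cast hn
  have hquad : (n : ℝ) * n / 4 ≤ (n - 1).choose 2 := by
    push_cast [Nat.cast_choose_two, Nat.cast_sub (show 1 ≤ n by lia)]
    nlinarith
  calc (n : ℝ) ≤ ε * n / 4 * n := by
        rw [div_le_iff₀' hε] at hεn
        nlinarith
    _ = ε * (n * n / 4) := by ring
    _ ≤ ε * (n - 1).choose 2 := by gcongr

/-- If `|X| = ⌈2n/3⌉`, then the 3-graph of all triples `e` with `|e ∩ X| ≠ 2` has no
tight Hamiltonian cycle, and for every `ε > 0` its minimum vertex degree is at least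
`(5/9 - ε)·C(n-1,2)` once `n` is large. -/
theorem stmt_2 :
    (∀ (V : Type) [DecidableEq V] [Fintype V], ∀ X : Finset V,
        (X.card : ℤ) = ⌈2 * (Fintype.card V : ℚ) / 3⌉ →
        ¬ HasTightHamCycle (compX V X)) ∧
    (∀ ε : ℝ, 0 < ε → ∃ n₀ : ℕ, ∀ n : ℕ, n₀ ≤ n →
      ∀ (V : Type) [DecidableEq V] [Fintype V], ∀ X : Finset V,
        Fintype.card V = n →
        (X.card : ℤ) = ⌈2 * (n : ℚ) / 3⌉ →
        ∀ v : V, (5 / 9 - ε) * ((n - 1).choose 2 : ℝ) ≤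
          (((compX V X).filter fun e => v ∈ e).card : ℝ)) := by
  constructor
  · intro V _ _ X hX hcycle
    obtain ⟨hlower, hupper⟩ := ceil_two_mul_div_three_bounds hX
    have hthree := three_le_card_of_hasTightHamCycle_compX hcycle
    exact not_hasTightHamCycle_compX (by lia) (by lia) hcycle
  · intro ε hε
    obtain ⟨n₀, hn₀⟩ := Filter.eventually_atTop.1 (eventually_le_mul_choose_two hε)
    refine ⟨n₀, fun n hn V _ _ X hV hX v ↦ ?_⟩
    subst hV
    obtain ⟨hlower, hupper⟩ := ceil_two_mul_div_three_bounds hX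
    have herror := hn₀ _ hn
    have hdegree := five_ninths_mul_choose_le_vertexDegree_compX_add_card hlower hupper v
    rw [vertexDegree] at hdegree
    linarith
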